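/- The effective Maxwell equations f_{[α₂…α_{p−1},α₁]} = 0 and (√(g̃) f^{β α₁…α_{p−2}})_{,β} = 0 satisfied by a VSI p-form Maxwell field are unchanged by adding a Chern–Simons term to the full Maxwell field equations, except in the case when the Chern–Simons term is linear. -/

import Mathlib

open scoped BigOperators

noncomputable section

namespace VSI

/-! ### Basic setup: tensor fields on an `n`-dimensional coordinate chart -/

/-- A point of an `n`-dimensional coordinate chart. -/
abbrev Pt (n : ℕ) := Fin n → ℝ

/-- A covariant tensor field of rank `k`, given by its components. -/
abbrev TensorField (n k : ℕ) := Pt n → (Fin k → Fin n) → ℝ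

/-- A vector field, given by its components. -/
abbrev VecField (n : ℕ) := Pt n → Fin n → ℝ

/-- A field of `n × n` matrices (e.g. a metric). -/
abbrev MetricField (n : ℕ) := Pt n → Matrix (Fin n) (Fin n) ℝ

/-- Partial derivative of a scalar function along the `a`-th coordinate. -/
def pd {n : ℕ} (f : Pt n → ℝ) (a : Fin n) (x : Pt n) : ℝ :=
  fderiv ℝ f x (Pi.single a 1)

/-- Partial derivative masked to the transverse directions (coordinates `≥ 2`). -/
def pdT {n : ℕ} (f : Pt n → ℝ) (a : Fin n) (x : Pt n) : ℝ :=
  if 2 ≤ (a : ℕ) then pd f a x else 0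

/-- A function on the chart is independent of the coordinate `r` (coordinate number 1). -/
def IndepOfR {n : ℕ} {α : Type*} (f : Pt n → α) : Prop :=
  ∀ x x' : Pt n, (∀ i : Fin n, (i : ℕ) ≠ 1 → x i = x' i) → f x = f x'

/-- A smooth symmetric metric of Lorentzian signature `(-,+,…,+)`. -/
def IsLorentzMetric {n : ℕ} (g : MetricField n) : Prop :=
  (∀ a b, ContDiff ℝ (⊤ : ℕ∞) fun x => g x a b) ∧ (∀ x, (g x).IsSymm) ∧
  (∀ x, ∃ P : Matrix (Fin n) (Fin n) ℝ, IsUnit P.det ∧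
    P.transpose * g x * P = Matrix.diagonal fun i : Fin n => if (i : ℕ) = 0 then (-1 : ℝ) else 1)

/-- Metric pairing of two vectors at a point. -/
def gdot {n : ℕ} (g : MetricField n) (x : Pt n) (X Y : Fin n → ℝ) : ℝ :=
  ∑ a, ∑ b, g x a b * X a * Y b

/-- Index lowering of a vector field. -/
def lower {n : ℕ} (g : MetricField n) (ℓ : VecField n) (x : Pt n) (a : Fin n) : ℝ :=
  ∑ b, g x a b * ℓ x b

/-- The 1-form (rank-1 covariant tensor field) associated with a vector field. -/
def lowerField {n : ℕ} (g : MetricField n) (ℓ : VecField n) : TensorField n 1 :=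
  fun x idx => lower g ℓ x (idx 0)

/-- Christoffel symbols `Γ^a_{bc}` of the Levi-Civita connection of `g`. -/
def christoffel {n : ℕ} (g : MetricField n) (x : Pt n) (a b c : Fin n) : ℝ :=
  (1/2) * ∑ d, (g x)⁻¹ a d *
    (pd (fun y => g y d c) b x + pd (fun y => g y b d) c x - pd (fun y => g y b c) d x)

/-- Covariant derivative of a covariant tensor field; the new (derivative) index is
the first index of the result. -/
def covD {n k : ℕ} (g : MetricField n) (T : TensorField n k) : TensorField n (k+1) :=
  fun x idx =>
    pd (fun y => T y fun m => idx m.succ) (idx 0) x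
    - ∑ m : Fin k, ∑ e : Fin n,
        christoffel g x e (idx 0) (idx m.succ) * T x (Function.update (fun m' => idx m'.succ) m e)

/-- Iterated covariant derivative. -/
def covDIter {n k : ℕ} (g : MetricField n) (T : TensorField n k) : (I : ℕ) → TensorField n (k + I)
  | 0 => T
  | I + 1 => covD g (covDIter g T I)

/-! ### Scalar polynomial invariants and tensor concomitants -/

/-- A scheme describing a polynomial concomitant of a rank-`k` tensor field: a full
metric contraction of a tensor product of covariant derivatives (of orders `ord j`)
of the field, with `r` free indices left over.  `m` is the number of contracted
index pairs; `slots` enumerates all index slots of the tensor product. -/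
structure ConcomScheme (k r : ℕ) where
  N : ℕ
  hN : 0 < N
  ord : Fin N → ℕ
  m : ℕ
  slots : ((Fin m × Bool) ⊕ Fin r) ≃ (Σ j : Fin N, Fin (k + ord j))

/-- The value of a concomitant scheme: all contracted index pairs are contracted with
the inverse metric. -/
def ConcomScheme.value {k r : ℕ} (S : ConcomScheme k r) {n : ℕ} (g : MetricField n)
    (T : TensorField n k) : TensorField n r := fun x free =>
  ∑ φ : Fin S.m × Bool → Fin n,
    (∏ i : Fin S.m, (g x)⁻¹ (φ (i, false)) (φ (i, true))) *
    ∏ j : Fin S.N, covDIter g T (S.ord j) x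
      (fun s => Sum.elim φ free (S.slots.symm ⟨j, s⟩))

/-- All scalar polynomial invariants constructed from `T` and its covariant
derivatives up to order `I` vanish. -/
def IsVSIUpTo {n k : ℕ} (g : MetricField n) (T : TensorField n k) (I : ℕ) : Prop :=
  ∀ S : ConcomScheme k 0, (∀ j, S.ord j ≤ I) → ∀ x v, S.value g T x v = 0

/-- All scalar polynomial invariants of arbitrary order vanish. -/
def IsVSI {n k : ℕ} (g : MetricField n) (T : TensorField n k) : Prop :=
  ∀ I : ℕ, IsVSIUpTo g T I

/-- All zeroth order scalar polynomial invariants of `T` vanish at the point `x`. -/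
def IsVSI0At {n k : ℕ} (g : MetricField n) (T : TensorField n k) (x : Pt n) : Prop :=
  ∀ S : ConcomScheme k 0, (∀ j, S.ord j = 0) → ∀ v, S.value g T x v = 0

/-- A rank-`r` tensor field `G` is (polynomially) constructed from `T`, its covariant
derivatives of arbitrary order and the metric. -/
def IsConstructedFrom {n k r : ℕ} (g : MetricField n) (T : TensorField n k)
    (G : TensorField n r) : Prop :=
  G ∈ Submodule.span ℝ {G' : TensorField n r | ∃ S : ConcomScheme k r, G' = S.value g T}

/-- A symmetric-2-tensor "correction" to the standard electromagnetic energy-momentum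
tensor: constructed from `T` and its covariant derivatives, where each monomial either
contains at least three factors of the field or at least one covariant derivative
(i.e. it comes from a non-Maxwellian term of a generalized electrodynamics). -/
def IsCorrectionTensor {n k : ℕ} (g : MetricField n) (T : TensorField n k)
    (Tc : TensorField n 2) : Prop :=
  Tc ∈ Submodule.span ℝ {G : TensorField n 2 |
    ∃ S : ConcomScheme k 2, (3 ≤ S.N ∨ ∃ j, 1 ≤ S.ord j) ∧ G = S.value g T}

/-! ### p-forms, type N, Lie derivative -/

def IsAlternating {n k : ℕ} (T : TensorField n k) : Prop :=
  ∀ (x : Pt n) (idx : Fin k → Fin n) (σ : Equiv.Perm (Fin k)),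
    T x (idx ∘ σ) = ((Equiv.Perm.sign σ : ℤ) : ℝ) * T x idx

def IsSmoothT {n k : ℕ} (T : TensorField n k) : Prop :=
  ∀ idx, ContDiff ℝ (⊤ : ℕ∞) fun x => T x idx

/-- A smooth differential form (totally antisymmetric covariant tensor field). -/
def IsFormField {n k : ℕ} (T : TensorField n k) : Prop :=
  IsSmoothT T ∧ IsAlternating T

def IsSmoothVec {n : ℕ} (ℓ : VecField n) : Prop :=
  ∀ a, ContDiff ℝ (⊤ : ℕ∞) fun x => ℓ x a

/-- A (nowhere vanishing, smooth) null vector field. -/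
def IsNullField {n : ℕ} (g : MetricField n) (ℓ : VecField n) : Prop :=
  IsSmoothVec ℓ ∧ (∀ x, ℓ x ≠ 0) ∧ ∀ x, gdot g x (ℓ x) (ℓ x) = 0

/-- `ℓ^a F_{a b₁ … b_{p-1}} = 0`. -/
def ContractsFirstZero {n p : ℕ} [NeZero p] (ℓ : VecField n) (F : TensorField n p) : Prop :=
  ∀ (x : Pt n) (v : Fin p → Fin n), (∑ a, ℓ x a * F x (Function.update v 0 a)) = 0

/-- `ℓ_{[a} F_{b₁ … b_p]} = 0`. -/
def WedgeWithZero {n p : ℕ} (g : MetricField n) (ℓ : VecField n) (F : TensorField n p) : Prop :=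
  ∀ (x : Pt n) (idx : Fin (p+1) → Fin n),
    (∑ σ : Equiv.Perm (Fin (p+1)), ((Equiv.Perm.sign σ : ℤ) : ℝ) *
      (lower g ℓ x (idx (σ 0)) * F x (fun m => idx (σ m.succ)))) = 0

/-- The `p`-form `F` is of type N with multiple null direction `ℓ`. -/
def IsTypeN {n p : ℕ} [NeZero p] (g : MetricField n) (F : TensorField n p)
    (ℓ : VecField n) : Prop :=
  IsNullField g ℓ ∧ ContractsFirstZero ℓ F ∧ WedgeWithZero g ℓ F

/-- Lie derivative of a covariant tensor field along a vector field. -/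
def lieD {n k : ℕ} (ℓ : VecField n) (T : TensorField n k) : TensorField n k :=
  fun x idx =>
    (∑ a, ℓ x a * pd (fun y => T y idx) a x)
    + ∑ m : Fin k, ∑ a, pd (fun y => ℓ y a) (idx m) x * T x (Function.update idx m a)

/-! ### Optical properties: geodesic, Kundt -/

/-- `∇_b ℓ_a` (first index is the derivative index). -/
def nablaLow {n : ℕ} (g : MetricField n) (ℓ : VecField n) (x : Pt n) (b a : Fin n) : ℝ :=
  covD g (lowerField g ℓ) x ![b, a]

/-- `ℓ` is geodesic: `ℓ^b ∇_b ℓ_a ∝ ℓ_a`. -/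
def IsGeodesicField {n : ℕ} (g : MetricField n) (ℓ : VecField n) : Prop :=
  ∀ x, ∃ c : ℝ, ∀ a, (∑ b, ℓ x b * nablaLow g ℓ x b a) = c * lower g ℓ x a

/-- `ℓ` is affinely parameterized: `ℓ^b ∇_b ℓ_a = 0`. -/
def IsAffinelyParam {n : ℕ} (g : MetricField n) (ℓ : VecField n) : Prop :=
  ∀ x a, (∑ b, ℓ x b * nablaLow g ℓ x b a) = 0

/-- `ℓ` is a Kundt null vector field: null, geodesic and with vanishing optical matrix
(expansion-free, shear-free and twist-free). -/
def IsKundt {n : ℕ} (g : MetricField n) (ℓ : VecField n) : Prop :=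
  IsNullField g ℓ ∧ IsGeodesicField g ℓ ∧
  ∀ (x : Pt n) (X Y : Fin n → ℝ), gdot g x X (ℓ x) = 0 → gdot g x Y (ℓ x) = 0 →
    (∑ a, ∑ b, X a * Y b * nablaLow g ℓ x b a) = 0

/-! ### Curvature -/

/-- Fully lowered Riemann tensor `R_{abcd}`. -/
def riemann {n : ℕ} (g : MetricField n) : TensorField n 4 := fun x idx =>
  ∑ e, g x (idx 0) e *
    (pd (fun y => christoffel g y e (idx 3) (idx 1)) (idx 2) x
     - pd (fun y => christoffel g y e (idx 2) (idx 1)) (idx 3) x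
     + ∑ f', (christoffel g x e (idx 2) f' * christoffel g x f' (idx 3) (idx 1)
            - christoffel g x e (idx 3) f' * christoffel g x f' (idx 2) (idx 1)))

def ricci {n : ℕ} (g : MetricField n) (x : Pt n) (b d : Fin n) : ℝ :=
  ∑ a, ∑ c, (g x)⁻¹ a c * riemann g x ![a, b, c, d]

def ricciScalar {n : ℕ} (g : MetricField n) (x : Pt n) : ℝ :=
  ∑ b, ∑ d, (g x)⁻¹ b d * ricci g x b d

def tracelessRicci {n : ℕ} (g : MetricField n) : TensorField n 2 := fun x idx =>
  ricci g x (idx 0) (idx 1) - ricciScalar g x / (n : ℝ) * g x (idx 0) (idx 1)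

/-- Weyl tensor `C_{abcd}` (for `n ≥ 3`). -/
def weyl {n : ℕ} (g : MetricField n) : TensorField n 4 := fun x idx =>
  riemann g x idx
  - (1 / ((n : ℝ) - 2)) *
      (g x (idx 0) (idx 2) * ricci g x (idx 3) (idx 1)
       - g x (idx 0) (idx 3) * ricci g x (idx 2) (idx 1)
       - g x (idx 1) (idx 2) * ricci g x (idx 3) (idx 0)
       + g x (idx 1) (idx 3) * ricci g x (idx 2) (idx 0))
  + (1 / (((n : ℝ) - 1) * ((n : ℝ) - 2))) * ricciScalar g x *
      (g x (idx 0) (idx 2) * g x (idx 3) (idx 1) - g x (idx 0) (idx 3) * g x (idx 2) (idx 1))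

/-! ### Null frames, boost weights, algebraic types -/

/-- A null frame at a point: two null vectors `e 0 = ℓ`, `e 1 = n` with `ℓ·n = 1`, and
orthonormal spacelike vectors `e i`, `i ≥ 2`, orthogonal to both. -/
structure NullFrameAt {n : ℕ} [NeZero n] (g : MetricField n) (x : Pt n) where
  e : Fin n → Fin n → ℝ
  h00 : gdot g x (e 0) (e 0) = 0
  h11 : gdot g x (e 1) (e 1) = 0
  h01 : gdot g x (e 0) (e 1) = 1
  h0i : ∀ i : Fin n, 2 ≤ (i : ℕ) → gdot g x (e 0) (e i) = 0
  h1i : ∀ i : Fin n, 2 ≤ (i : ℕ) → gdot g x (e 1) (e i) = 0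
  hij : ∀ i j : Fin n, 2 ≤ (i : ℕ) → 2 ≤ (j : ℕ) →
    gdot g x (e i) (e j) = (if i = j then 1 else 0)

/-- Boost weight of a frame multi-index: `+1` for each contraction with `ℓ = e 0`,
`-1` for each contraction with `n = e 1`. -/
def bw {n k : ℕ} (a : Fin k → Fin n) : ℤ :=
  ((Finset.univ.filter fun m => (a m : ℕ) = 0).card : ℤ)
  - ((Finset.univ.filter fun m => (a m : ℕ) = 1).card : ℤ)

/-- Frame components of a covariant tensor. -/
def frameComp {n k : ℕ} (T : TensorField n k) (e : Fin n → Fin n → ℝ) (x : Pt n)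
    (a : Fin k → Fin n) : ℝ :=
  ∑ idx : Fin k → Fin n, T x idx * ∏ m, e (a m) (idx m)

/-- The tensor field `T` has boost order at most `b` with respect to the null
direction `ℓ`: in any null frame containing `ℓ`, all frame components of boost
weight `> b` vanish.  `b = 0` is the aligned type II condition, `b = -1` type III. -/
def BoostOrderLE {n k : ℕ} [NeZero n] (g : MetricField n) (ℓ : VecField n)
    (T : TensorField n k) (b : ℤ) : Prop :=
  ∀ (x : Pt n) (fr : NullFrameAt g x), fr.e 0 = ℓ x →
    ∀ a : Fin k → Fin n, b < bw a → frameComp T fr.e x a = 0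

/-- `g` is a degenerate Kundt metric with Kundt null direction `ℓ`: `ℓ` is Kundt and
the Riemann tensor together with its covariant derivatives of all orders is of aligned
type II with respect to `ℓ`. -/
def IsDegenerateKundt {n : ℕ} [NeZero n] (g : MetricField n) (ℓ : VecField n) : Prop :=
  IsKundt g ℓ ∧ ∀ I : ℕ, BoostOrderLE g ℓ (covDIter g (riemann g) I) 0

/-! ### Exterior derivative, Hodge dual, Maxwell equations -/

/-- Exterior derivative (components, no normalization factor). -/
def extD {n k : ℕ} (F : TensorField n k) : TensorField n (k+1) := fun x idx =>
  ∑ m : Fin (k+1), (-1 : ℝ) ^ (m : ℕ) *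
    pd (fun y => F y fun i => idx (m.succAbove i)) (idx m) x

/-- Sign of a self-map of `Fin k` (0 if not bijective). -/
def permSign {k : ℕ} (f : Fin k → Fin k) : ℤ :=
  if h : Function.Bijective f then Equiv.Perm.sign (Equiv.ofBijective f h) else 0

/-- Raise all indices of a covariant tensor with the inverse metric. -/
def raiseAll {n k : ℕ} (g : MetricField n) (T : TensorField n k) : TensorField n k :=
  fun x idx => ∑ jdx : Fin k → Fin n, (∏ m, (g x)⁻¹ (idx m) (jdx m)) * T x jdx

/-- Hodge dual of a `p`-form (`p + q = n`), via the metric volume element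
`√|det g| ε_{a₁…aₙ}`. -/
def hodge {n p q : ℕ} (h : p + q = n) (g : MetricField n) (F : TensorField n p) :
    TensorField n q := fun x idx =>
  (1 / (Nat.factorial p : ℝ)) *
    ∑ a : Fin p → Fin n, raiseAll g F x a *
      (Real.sqrt |(g x).det| *
        ((permSign fun i => Fin.append a idx (Fin.cast h.symm i) : ℤ) : ℝ))

/-- Source-free Maxwell equations `dF = 0 = d*F` for a `p`-form (`p + q = n`). -/
def MaxwellEqs {n p q : ℕ} (h : p + q = n) (g : MetricField n) (F : TensorField n p) : Prop :=
  (∀ x idx, extD F x idx = 0) ∧ (∀ x idx, extD (hodge h g F) x idx = 0)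

/-! ### Wedge products -/

def wedgeP {n a b : ℕ} (F : TensorField n a) (G : TensorField n b) : TensorField n (a+b) :=
  fun x idx => ∑ σ : Equiv.Perm (Fin (a+b)), ((Equiv.Perm.sign σ : ℤ) : ℝ) *
    (F x fun i => idx (σ (Fin.castAdd b i))) * (G x fun j => idx (σ (Fin.natAdd a j)))

def wedgePow {n p : ℕ} (F : TensorField n p) : (k : ℕ) → TensorField n (p * k)
  | 0 => fun _ _ => 1
  | k + 1 => wedgeP (wedgePow F k) F

def castT {n a b : ℕ} (h : a = b) (T : TensorField n a) : TensorField n b :=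
  fun x idx => T x fun i => idx (Fin.cast h i)

/-! ### Degenerate Kundt metrics in adapted coordinates -/

/-- The Kundt metric `ds² = 2 du (dr + H du + W_α dx^α) + g_{αβ} dx^α dx^β` in
coordinates `(u, r, x^α) = (x⁰, x¹, x^{α≥2})`. -/
def kundtMetric {n : ℕ} (H : Pt n → ℝ) (W : Pt n → Fin n → ℝ) (hT : MetricField n) :
    MetricField n := fun x => Matrix.of fun a b =>
  if (a : ℕ) = 0 ∧ (b : ℕ) = 0 then 2 * H x
  else if ((a : ℕ) = 0 ∧ (b : ℕ) = 1) ∨ ((a : ℕ) = 1 ∧ (b : ℕ) = 0) then 1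
  else if (a : ℕ) = 0 then W x b
  else if (b : ℕ) = 0 then W x a
  else if (a : ℕ) = 1 ∨ (b : ℕ) = 1 then 0
  else hT x a b

/-- A transverse (Riemannian) metric `g_{αβ}(u,x)`, stored as an `n×n` matrix padded
by the identity on the coordinates `u, r`. -/
def IsTransverseMetric {n : ℕ} (hT : MetricField n) : Prop :=
  (∀ (x : Pt n) (a b : Fin n), ((a : ℕ) < 2 ∨ (b : ℕ) < 2) → hT x a b = (if a = b then 1 else 0)) ∧
  (∀ x, (hT x).IsSymm) ∧ (∀ a b, ContDiff ℝ (⊤ : ℕ∞) fun x => hT x a b) ∧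
  IndepOfR hT ∧ (∀ x, (hT x).PosDef)

/-- Data of a degenerate Kundt metric: `W_α = r W¹_α + W⁰_α`,
`H = r² H² + r H¹ + H⁰`, transverse metric `hT`. -/
structure DegKundtData (n : ℕ) where
  H2 : Pt n → ℝ
  H1 : Pt n → ℝ
  H0 : Pt n → ℝ
  W1 : Pt n → Fin n → ℝ
  W0 : Pt n → Fin n → ℝ
  hT : MetricField n

def DegKundtData.Hfun {n : ℕ} [NeZero n] (D : DegKundtData n) : Pt n → ℝ :=
  fun z => (z 1)^2 * D.H2 z + z 1 * D.H1 z + D.H0 z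

def DegKundtData.Wfun {n : ℕ} [NeZero n] (D : DegKundtData n) : Pt n → Fin n → ℝ :=
  fun z b => z 1 * D.W1 z b + D.W0 z b

/-- The degenerate Kundt metric built from the data. -/
def DegKundtData.metric {n : ℕ} [NeZero n] (D : DegKundtData n) : MetricField n :=
  kundtMetric D.Hfun D.Wfun D.hT

/-- Regularity and shape conditions on the degenerate Kundt data: the metric functions
depend only on `(u, x^α)` and are smooth, `W`'s are transverse. -/
def DegKundtData.Regular {n : ℕ} (D : DegKundtData n) : Prop :=
  IsTransverseMetric D.hT ∧
  IndepOfR D.H2 ∧ IndepOfR D.H1 ∧ IndepOfR D.H0 ∧ IndepOfR D.W1 ∧ IndepOfR D.W0 ∧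
  ContDiff ℝ (⊤ : ℕ∞) D.H2 ∧ ContDiff ℝ (⊤ : ℕ∞) D.H1 ∧ ContDiff ℝ (⊤ : ℕ∞) D.H0 ∧
  (∀ a, ContDiff ℝ (⊤ : ℕ∞) fun x => D.W1 x a) ∧ (∀ a, ContDiff ℝ (⊤ : ℕ∞) fun x => D.W0 x a) ∧
  (∀ (x : Pt n) (a : Fin n), (a : ℕ) < 2 → D.W1 x a = 0) ∧ (∀ (x : Pt n) (a : Fin n), (a : ℕ) < 2 → D.W0 x a = 0)

/-- The `(q+1)`-form `du ∧ f` built from a transverse `q`-form `f`. -/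
def duWedge {n q : ℕ} (f : TensorField n q) : TensorField n (q+1) := fun x idx =>
  ∑ m : Fin (q+1), (-1 : ℝ) ^ (m : ℕ) * (if (idx m : ℕ) = 0 then 1 else 0) *
    f x (fun i => idx (m.succAbove i))

/-- `f_{[α₂…α_p , α₁]} = 0`: `f` is closed in the transverse geometry. -/
def TransClosed {n q : ℕ} (f : TensorField n q) : Prop :=
  ∀ (x : Pt n) (v : Fin (q+1) → Fin n), (∀ i, 2 ≤ (v i : ℕ)) →
    (∑ m : Fin (q+1), (-1 : ℝ) ^ (m : ℕ) *
      pd (fun y => f y fun i => v (m.succAbove i)) (v m) x) = 0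

/-- `(√g̃ f^{β α₁…α_{p-2}})_{,β} = 0`: `f` is co-closed in the transverse geometry. -/
def TransCoclosed {n q : ℕ} [NeZero q] (hT : MetricField n) (f : TensorField n q) : Prop :=
  ∀ (x : Pt n) (v : Fin q → Fin n),
    (∑ b : Fin n, pd (fun y =>
      Real.sqrt (hT y).det * raiseAll hT f y (Function.update v 0 b)) b x) = 0

/-! ### Transverse curvature -/

def christoffelT {n : ℕ} (h : MetricField n) (x : Pt n) (a b c : Fin n) : ℝ :=
  (1/2) * ∑ d, (h x)⁻¹ a d *
    (pdT (fun y => h y d c) b x + pdT (fun y => h y b d) c x - pdT (fun y => h y b c) d x)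

def covDT {n k : ℕ} (h : MetricField n) (T : TensorField n k) : TensorField n (k+1) :=
  fun x idx =>
    pdT (fun y => T y fun m => idx m.succ) (idx 0) x
    - ∑ m : Fin k, ∑ e : Fin n,
        christoffelT h x e (idx 0) (idx m.succ) * T x (Function.update (fun m' => idx m'.succ) m e)

def riemannT {n : ℕ} (h : MetricField n) : TensorField n 4 := fun x idx =>
  ∑ e, h x (idx 0) e *
    (pdT (fun y => christoffelT h y e (idx 3) (idx 1)) (idx 2) x
     - pdT (fun y => christoffelT h y e (idx 2) (idx 1)) (idx 3) x
     + ∑ f', (christoffelT h x e (idx 2) f' * christoffelT h x f' (idx 3) (idx 1)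
            - christoffelT h x e (idx 3) f' * christoffelT h x f' (idx 2) (idx 1)))

def ricciT {n : ℕ} (h : MetricField n) (x : Pt n) (b d : Fin n) : ℝ :=
  ∑ a, ∑ c, (h x)⁻¹ a c * riemannT h x ![a, b, c, d]

def ricciScalarT {n : ℕ} (h : MetricField n) (x : Pt n) : ℝ :=
  ∑ b, ∑ d, (h x)⁻¹ b d * ricciT h x b d

/-- A covector field as a rank-1 tensor field. -/
def oneForm {n : ℕ} (W : Pt n → Fin n → ℝ) : TensorField n 1 := fun x idx => W x (idx 0)

/-- Transverse covariant derivative `∇̃_b V_a` (`= V_{a||b}`). -/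
def nablaT {n : ℕ} (h : MetricField n) (V : TensorField n 1) (x : Pt n) (b a : Fin n) : ℝ :=
  covDT h V x ![b, a]

/-- Second transverse covariant derivative `∇̃_c ∇̃_b V_a`. -/
def nablaT2 {n : ℕ} (h : MetricField n) (V : TensorField n 1) (x : Pt n) (c b a : Fin n) : ℝ :=
  covDT h (covDT h V) x ![c, b, a]

/-- Transverse divergence `V^{α}{}_{||α}`. -/
def divT {n : ℕ} (h : MetricField n) (V : TensorField n 1) (x : Pt n) : ℝ :=
  ∑ b, ∑ c, (h x)⁻¹ b c * nablaT h V x b c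

def gradT {n : ℕ} (f : Pt n → ℝ) : TensorField n 1 := fun x idx => pdT f (idx 0) x

/-- Transverse Laplacian. -/
def laplaceT {n : ℕ} (h : MetricField n) (f : Pt n → ℝ) (x : Pt n) : ℝ :=
  ∑ a, ∑ b, (h x)⁻¹ a b * covDT h (gradT f) x ![a, b]

def lnSqrtDet {n : ℕ} (h : MetricField n) (y : Pt n) : ℝ :=
  Real.log (Real.sqrt (h y).det)

/-! ### Electromagnetic energy-momentum tensor -/

/-- Standard energy-momentum tensor of a `(q+1)`-form Maxwell field:
`T_{ab} = (1/q!) (F_{a c⃗} F_b{}^{c⃗} - (1/(2(q+1))) g_{ab} F_{c⃗}F^{c⃗})`. -/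
def emTensor {n q : ℕ} (g : MetricField n) (F : TensorField n (q+1)) (x : Pt n)
    (a b : Fin n) : ℝ :=
  (1 / (Nat.factorial q : ℝ)) *
    ((∑ v : Fin q → Fin n, F x (Fin.cons a v) *
        ∑ w : Fin q → Fin n, (∏ i, (g x)⁻¹ (v i) (w i)) * F x (Fin.cons b w))
     - (1 / (2 * ((q : ℝ) + 1))) * g x a b *
        ∑ v : Fin (q+1) → Fin n, F x v * raiseAll g F x v)

/-! ### Coordinate transformations (for adapted coordinates) -/

/-- Jacobian `∂ψ^a/∂y^b` of a coordinate change. -/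
def jac {n : ℕ} (ψ : Pt n → Pt n) (y : Pt n) (a b : Fin n) : ℝ :=
  pd (fun z => ψ z a) b y

/-- Pullback of the metric along the coordinate change `ψ` (from new to old coords). -/
def pullMetric {n : ℕ} (g : MetricField n) (ψ : Pt n → Pt n) : MetricField n :=
  fun y => Matrix.of fun μ ν => ∑ a, ∑ b, jac ψ y a μ * jac ψ y b ν * g (ψ y) a b

/-- Pullback of a covariant tensor field along `ψ`. -/
def pullForm {n p : ℕ} (F : TensorField n p) (ψ : Pt n → Pt n) : TensorField n p :=
  fun y idx => ∑ jdx : Fin p → Fin n, (∏ m, jac ψ y (jdx m) (idx m)) * F (ψ y) jdx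

/-! ### Parallelly transported adapted frames -/

/-- A null frame field containing `ℓ`, parallelly transported along `ℓ` and adapted
(`M^i_{jk} = 0`). -/
structure AdaptedPTFrame {n : ℕ} [NeZero n] (g : MetricField n) (ℓ : VecField n) where
  fr : ∀ x : Pt n, NullFrameAt g x
  aligned : ∀ x, (fr x).e 0 = ℓ x
  parallel : ∀ (x : Pt n) (a c : Fin n),
    (∑ b, ℓ x b * (pd (fun y => (fr y).e a c) b x
      + ∑ d, christoffel g x c b d * (fr x).e a d)) = 0
  adapted : ∀ (x : Pt n) (i j k : Fin n), 2 ≤ (i : ℕ) → 2 ≤ (j : ℕ) → 2 ≤ (k : ℕ) →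
    (∑ a, ∑ b, covD g (lowerField g fun z => (fr z).e j) x ![b, a]
      * (fr x).e i a * (fr x).e k b) = 0

/-! ### Explicit Petrov type III solutions -/

/-- The type III vacuum metric of Petrov,
`ds² = 2 du (dr + ½(xr − x eˣ) du) + eˣ(dx² + e^{2u} dy²)`, in coordinates
`(u,r,x,y)`. -/
def petrovG : MetricField 4 := fun z => Matrix.of fun a b =>
  if a = 0 ∧ b = 0 then z 2 * z 1 - z 2 * Real.exp (z 2)
  else if (a = 0 ∧ b = 1) ∨ (a = 1 ∧ b = 0) then 1
  else if a = 2 ∧ b = 2 then Real.exp (z 2)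
  else if a = 3 ∧ b = 3 then Real.exp (z 2 + 2 * z 0)
  else 0

/-- The same metric with the electromagnetic backreaction term
`−2κ₀ eˣ c(u)²` included in `2H`. -/
def petrovEM (κ₀ : ℝ) (c : ℝ → ℝ) : MetricField 4 := fun z => Matrix.of fun a b =>
  if a = 0 ∧ b = 0 then z 2 * z 1 - z 2 * Real.exp (z 2) - 2 * κ₀ * Real.exp (z 2) * (c (z 0))^2
  else if (a = 0 ∧ b = 1) ∨ (a = 1 ∧ b = 0) then 1
  else if a = 2 ∧ b = 2 then Real.exp (z 2)
  else if a = 3 ∧ b = 3 then Real.exp (z 2 + 2 * z 0)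
  else 0

/-- The null direction `ℓ = ∂_r`. -/
def ellR : VecField 4 := fun _ a => if a = 1 then 1 else 0

/-- The transverse covector of the VSI Maxwell field (4). -/
def petrovA (c : ℝ → ℝ) (z : Pt 4) : Fin 4 → ℝ := fun a =>
  if a = 2 then -(Real.exp (z 2 / 2) * c (z 0) * Real.cos (z 3 * Real.exp (z 0) / 2))
  else if a = 3 then Real.exp (z 2 / 2) * c (z 0) * Real.exp (z 0) * Real.sin (z 3 * Real.exp (z 0) / 2)
  else 0

/-- The Maxwell 2-form
`F = e^{x/2} c(u) du ∧ (−cos(y eᵘ/2) dx + eᵘ sin(y eᵘ/2) dy)`. -/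
def petrovF (c : ℝ → ℝ) : TensorField 4 2 := fun z idx =>
  (if idx 0 = 0 then petrovA c z (idx 1) else 0)
  - (if idx 1 = 0 then petrovA c z (idx 0) else 0)


/-- Pointwise alternation. -/
def Alt {n k : ℕ} (T : (Fin k → Fin n) → ℝ) : Prop :=
  ∀ (idx : Fin k → Fin n) (σ : Equiv.Perm (Fin k)),
    T (idx ∘ σ) = ((Equiv.Perm.sign σ : ℤ) : ℝ) * T idx

theorem Alt.eq_zero {n k : ℕ} {T : (Fin k → Fin n) → ℝ} (h : Alt T) {v : Fin k → Fin n}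
    {i j : Fin k} (hij : i ≠ j) (hv : v i = v j) : T v = 0 := by
  have h1 := h v (Equiv.swap i j)
  have h2 : v ∘ Equiv.swap i j = v := by
    ext m
    simp only [Function.comp, Equiv.swap_apply_def]
    split_ifs with h3 h4
    · rw [h3, hv]
    · rw [h4, hv]
    · rfl
  rw [h2, Equiv.Perm.sign_swap hij] at h1
  push_cast at h1
  linarith

theorem Alt.eq_zero' {n k : ℕ} {T : (Fin k → Fin n) → ℝ} (h : Alt T) {v : Fin k → Fin n}
    (hv : ¬ Function.Injective v) : T v = 0 := by
  simp only [Function.Injective, not_forall] at hv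
  obtain ⟨i, j, h1, h2⟩ := hv
  exact h.eq_zero h2 h1

/-- The alternating map with given components. -/
def mkAlt {n k : ℕ} (T : (Fin k → Fin n) → ℝ) (h : Alt T) :
    (Fin n → ℝ) [⋀^Fin k]→ₗ[ℝ] ℝ where
  toMultilinearMap := ∑ idx : Fin k → Fin n, T idx •
    (MultilinearMap.mkPiAlgebra ℝ (Fin k) ℝ).compLinearMap (fun m => LinearMap.proj (idx m))
  map_eq_zero_of_eq' := by
    intro v i j hv hij
    simp only [MultilinearMap.toFun_eq_coe, _root_.sum_apply, _root_.smul_apply, 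
      MultilinearMap.compLinearMap_apply, MultilinearMap.mkPiAlgebra_apply, LinearMap.proj_apply,
      smul_eq_mul]
    have key : ∑ idx : Fin k → Fin n, T idx * ∏ m, v m (idx m)
        = ∑ idx : Fin k → Fin n, -(T idx * ∏ m, v m (idx m)) := by
      refine Fintype.sum_equiv (Equiv.arrowCongr (Equiv.swap i j) (Equiv.refl _)) _ _ ?_
      intro idx
      have e : (Equiv.arrowCongr (Equiv.swap i j) (Equiv.refl (Fin n))) idx 
          = idx ∘ (Equiv.swap i j) := by
        ext m; simp [Equiv.arrowCongr]
      rw [e, h, Equiv.Perm.sign_swap hij]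
      have e2 : ∏ m, v m ((idx ∘ (Equiv.swap i j)) m) = ∏ m, v m (idx m) := by
        refine Fintype.prod_equiv (Equiv.swap i j) _ _ ?_
        intro m
        have : v m = v (Equiv.swap i j m) := by
          simp only [Equiv.swap_apply_def]
          split_ifs with h3 h4
          · rw [h3, hv]
          · rw [h4, hv]
          · rfl
        rw [this]; rfl
      rw [e2]; push_cast; ring
    rw [Finset.sum_neg_distrib] at key
    linarith

theorem mkAlt_single {n k : ℕ} (T : (Fin k → Fin n) → ℝ) (h : Alt T) (v : Fin k → Fin n) :
    mkAlt T h (fun m => Pi.single (v m) 1) = T v := by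
  have : mkAlt T h (fun m => Pi.single (v m) 1) = 
     ∑ idx : Fin k → Fin n, T idx * ∏ m, (Pi.single (v m) 1 : Fin n → ℝ) (idx m) := by
    change (∑ idx : Fin k → Fin n, T idx •
      (MultilinearMap.mkPiAlgebra ℝ (Fin k) ℝ).compLinearMap 
        (fun m => (LinearMap.proj (idx m) : (Fin n → ℝ) →ₗ[ℝ] ℝ))) (fun m => Pi.single (v m) 1) = _
    simp only [_root_.sum_apply, _root_.smul_apply, 
      MultilinearMap.compLinearMap_apply, MultilinearMap.mkPiAlgebra_apply, LinearMap.proj_apply,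
      smul_eq_mul]
  rw [this, Finset.sum_eq_single v]
  · simp
  · intro b _ hb
    obtain ⟨m, hm⟩ := Function.ne_iff.mp hb
    rw [Finset.prod_eq_zero (Finset.mem_univ m), mul_zero]
    rw [Pi.single_apply, if_neg hm]
  · simp

theorem alt_S {n k : ℕ} (G : Fin n → (Fin k → Fin n) → ℝ) (hG : ∀ b, Alt (G b)) :
    Alt (fun j : Fin (k+1) → Fin n => ∑ m : Fin (k+1), (-1 : ℝ) ^ (m : ℕ) * G (j m) (fun i => j (m.succAbove i))) := by
  have key : ∀ j : Fin (k+1) → Fin n, 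
      ∑ m : Fin (k+1), (-1 : ℝ) ^ (m : ℕ) * G (j m) (fun i => j (m.succAbove i)) =
      AlternatingMap.alternatizeUncurryFin (∑ b, (LinearMap.proj b : (Fin n → ℝ) →ₗ[ℝ] ℝ).smulRight 
        (mkAlt (G b) (hG b))) (fun m => Pi.single (j m) 1) := by
    intro j
    rw [AlternatingMap.alternatizeUncurryFin_apply]
    refine Finset.sum_congr rfl fun m _ => ?_
    have e : m.removeNth (fun m => (Pi.single (j m) 1 : Fin n → ℝ)) 
      = fun i => Pi.single (j (m.succAbove i)) 1 := rfl
    rw [e, LinearMap.sum_apply, Finset.sum_eq_single (j m)]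
    · simp [mkAlt_single]
    · intro b _ hb
      simp [Pi.single_apply, hb]
    · simp
  intro j σ
  simp only [key]
  have := AlternatingMap.map_perm (AlternatingMap.alternatizeUncurryFin (∑ b, (LinearMap.proj b : (Fin n → ℝ) →ₗ[ℝ] ℝ).smulRight 
        (mkAlt (G b) (hG b)))) (fun m => Pi.single (j m) 1) σ
  rw [show (fun m => (Pi.single ((j ∘ σ) m) 1 : Fin n → ℝ)) = (fun m => (Pi.single (j m) 1 : Fin n → ℝ)) ∘ σ from rfl, this]
  rw [Units.smul_def, zsmul_eq_mul]

/-- antisymmetrization vanishes on repeated indices -/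
theorem antisym_zero {n k : ℕ} (T : (Fin k → Fin n) → ℝ) {v : Fin k → Fin n}
    {i j : Fin k} (hij : i ≠ j) (hv : v i = v j) :
    ∑ σ : Equiv.Perm (Fin k), ((Equiv.Perm.sign σ : ℤ) : ℝ) * T (v ∘ σ) = 0 := by
  have h2 : v ∘ Equiv.swap i j = v := by
    ext m
    simp only [Function.comp, Equiv.swap_apply_def]
    split_ifs with h3 h4
    · rw [h3, hv]
    · rw [h4, hv]
    · rfl
  have key : ∑ σ : Equiv.Perm (Fin k), ((Equiv.Perm.sign σ : ℤ) : ℝ) * T (v ∘ σ) =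
      ∑ σ : Equiv.Perm (Fin k), -(((Equiv.Perm.sign σ : ℤ) : ℝ) * T (v ∘ σ)) := by
    refine Fintype.sum_equiv (Equiv.mulLeft (Equiv.swap i j)) _ _ ?_
    intro σ
    have : v ∘ ((Equiv.mulLeft (Equiv.swap i j)) σ) = v ∘ σ := by
      conv_rhs => rw [← h2]
      rfl
    rw [this]
    simp [Equiv.Perm.sign_swap hij]
  rw [Finset.sum_neg_distrib] at key
  linarith

theorem sum_alt_alt {n k : ℕ} (A B : (Fin k → Fin n) → ℝ) (hA : Alt A) (hB : Alt B)
    (a0 : Fin k → Fin n) (h0 : Function.Injective a0)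
    (hs : ∀ a, B a ≠ 0 → ∃ σ : Equiv.Perm (Fin k), a = a0 ∘ σ) :
    ∑ a, A a * B a = (Nat.factorial k : ℝ) * (A a0 * B a0) := by
  classical
  have hinj : Function.Injective (fun σ : Equiv.Perm (Fin k) => a0 ∘ σ) := by
    intro σ τ h
    ext i
    have := h0 (congrFun h i)
    rw [this]
  have h1 : ∑ a, A a * B a = ∑ a ∈ Finset.univ.image (fun σ : Equiv.Perm (Fin k) => a0 ∘ σ), A a * B a := by
    symm
    apply Finset.sum_subset (Finset.subset_univ _)
    intro a _ ha
    by_contra hne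
    obtain ⟨σ, hσ⟩ := hs a (right_ne_zero_of_mul hne)
    exact ha (Finset.mem_image.mpr ⟨σ, Finset.mem_univ _, hσ.symm⟩)
  rw [h1, Finset.sum_image (fun _ _ _ _ h => hinj h)]
  have h2 : ∀ σ : Equiv.Perm (Fin k), A (a0 ∘ σ) * B (a0 ∘ σ) = A a0 * B a0 := by
    intro σ
    rw [hA, hB]
    rcases Int.units_eq_one_or (Equiv.Perm.sign σ) with h | h <;> rw [h] <;> push_cast <;> ring
  simp [h2, Fintype.card_perm]

theorem permSign_comp {k : ℕ} (f : Fin k → Fin k) (τ : Equiv.Perm (Fin k)) :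
    permSign (f ∘ τ) = Equiv.Perm.sign τ * permSign f := by
  unfold permSign
  by_cases h : Function.Bijective f
  · have h' : Function.Bijective (f ∘ τ) := h.comp τ.bijective
    rw [dif_pos h, dif_pos h']
    have : Equiv.ofBijective (f ∘ τ) h' = Equiv.ofBijective f h * τ := by
      ext i; simp
    rw [this, Equiv.Perm.sign_mul, mul_comm]; push_cast; rfl
  · have h' : ¬ Function.Bijective (f ∘ τ) := by
      intro hc; apply h
      have := hc.comp τ.symm.bijective
      simpa [Function.comp_assoc] using this
    rw [dif_neg h, dif_neg h', mul_zero]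

theorem permSign_ne {k : ℕ} {f : Fin k → Fin k} : permSign f ≠ 0 ↔ Function.Bijective f := by
  unfold permSign
  by_cases h : Function.Bijective f
  · rw [dif_pos h]; exact ⟨fun _ => h, fun _ => Units.ne_zero _⟩
  · rw [dif_neg h]; exact ⟨fun h2 => absurd rfl h2, fun h2 => absurd h2 h⟩

theorem isAlt_iff {n k : ℕ} {T : TensorField n k} : IsAlternating T ↔ ∀ x, Alt (T x) := Iff.rfl

/-- `e_c ∧ f` -/
def eW {n q : ℕ} (c : Fin n) (f : TensorField n q) : TensorField n (q+1) := fun x idx =>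
  ∑ m : Fin (q+1), (-1 : ℝ) ^ (m : ℕ) * ((if idx m = c then 1 else 0) *
    f x (fun i => idx (m.succAbove i)))

theorem eW_alt {n q : ℕ} (c : Fin n) (f : TensorField n q) (hf : IsAlternating f) :
    IsAlternating (eW c f) := by
  intro x
  refine alt_S (fun b v => (if b = c then 1 else 0) * f x v) ?_
  intro b v σ
  simp only
  rw [hf x v σ]; ring

theorem eW_no {n q : ℕ} (c : Fin n) (f : TensorField n q) (x : Pt n) (idx : Fin (q+1) → Fin n)
    (h : ∀ m, idx m ≠ c) : eW c f x idx = 0 := by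
  unfold eW
  exact Finset.sum_eq_zero fun m _ => by simp [h m]

theorem eW_cons {n q : ℕ} (c : Fin n) (f : TensorField n q) (x : Pt n) (v : Fin q → Fin n)
    (h : ∀ m, v m ≠ c) : eW c f x (Fin.cons c v) = f x v := by
  unfold eW
  rw [Fin.sum_univ_succ]
  simp [h]

theorem duWedge_eq {n q : ℕ} [NeZero n] (f : TensorField n q) : duWedge f = eW 0 f := by
  ext x idx
  unfold duWedge eW
  refine Finset.sum_congr rfl fun m _ => ?_
  have : ((idx m : ℕ) = 0) ↔ (idx m = 0) := by
    rw [Fin.ext_iff, Fin.val_zero]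
  simp only [this]; ring

theorem wedgePow_no {n p : ℕ} (c : Fin n) (F : TensorField n p)
    (hF : ∀ x idx, (∀ m, idx m ≠ c) → F x idx = 0) (k : ℕ) (x : Pt n)
    (idx : Fin (p * (k+1)) → Fin n) (h : ∀ m, idx m ≠ c) : wedgePow F (k+1) x idx = 0 := by
  change wedgeP (wedgePow F k) F x idx = 0
  unfold wedgeP
  refine Finset.sum_eq_zero fun σ _ => ?_
  rw [hF x (fun j => _) (fun m => h _), mul_zero]

theorem wedgePow_zero {n p : ℕ} (c : Fin n) (F : TensorField n p)
    (hF : ∀ x idx, (∀ m, idx m ≠ c) → F x idx = 0) (k : ℕ) (hk : 2 ≤ k) (x : Pt n)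
    (idx : Fin (p * k) → Fin n) : wedgePow F k x idx = 0 := by
  obtain ⟨k, rfl⟩ : ∃ k', k = k' + 2 := ⟨k - 2, by omega⟩
  change wedgeP (wedgePow F (k+1)) F x idx = 0
  unfold wedgeP
  by_cases h : ∃ i j, i ≠ j ∧ idx i = c ∧ idx j = c
  · obtain ⟨i, j, hij, hi, hj⟩ := h
    have := antisym_zero (fun v : Fin (p * (k+1) + p) → Fin n => 
      (wedgePow F (k+1) x fun i => v (Fin.castAdd p i)) * (F x fun j => v (Fin.natAdd (p * (k+1)) j)))
      hij (v := idx) (hi.trans hj.symm)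
    rw [← this]
    refine Finset.sum_congr rfl fun σ _ => ?_
    simp only [Function.comp]; rw [mul_assoc]
  · refine Finset.sum_eq_zero fun σ _ => ?_
    by_cases h1 : ∀ m, idx (σ (Fin.natAdd (p * (k+1)) m)) ≠ c
    · rw [hF x (fun j => _) h1, mul_zero]
    · push Not at h1
      obtain ⟨m, hm⟩ := h1
      have : ∀ m', idx (σ (Fin.castAdd p m')) ≠ c := by
        intro m' hm'
        refine h ⟨_, _, ?_, hm, hm'⟩
        intro he
        have := σ.injective he
        have := congrArg Fin.val this
        simp at this
        omega
      rw [wedgePow_no c F hF k x (fun i => _) this]; ring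

theorem pd_const {n : ℕ} (c : ℝ) (a : Fin n) (x : Pt n) : pd (fun _ => c) a x = 0 := by
  simp [pd]

theorem pd_r {n : ℕ} (f : Pt n → ℝ) (a : Fin n) (ha : (a : ℕ) = 1) (hf : IndepOfR f) (x : Pt n) : 
    pd f a x = 0 := by
  unfold pd
  by_cases hd : DifferentiableAt ℝ f x
  · rw [← hd.lineDeriv_eq_fderiv, lineDeriv]
    have : (fun t : ℝ => f (x + t • Pi.single a 1)) = fun _ => f x := by
      ext t
      apply hf
      intro i hi
      have : i ≠ a := by rintro rfl; exact hi ha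
      simp [this]
    rw [this]; simp
  · rw [fderiv_zero_of_not_differentiableAt hd]; simp

theorem pd_sum {n : ℕ} {ι : Type*} (s : Finset ι) (f : ι → Pt n → ℝ) (a : Fin n) (x : Pt n)
    (h : ∀ i ∈ s, DifferentiableAt ℝ (f i) x) :
    pd (fun y => ∑ i ∈ s, f i y) a x = ∑ i ∈ s, pd (f i) a x := by
  unfold pd
  rw [fderiv_fun_sum h]
  simp

theorem pd_cmul {n : ℕ} (c : ℝ) (f : Pt n → ℝ) (a : Fin n) (x : Pt n)
    (h : DifferentiableAt ℝ f x) :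
    pd (fun y => c * f y) a x = c * pd f a x := by
  unfold pd
  rw [fderiv_const_mul h]
  simp

theorem extD_alt {n k : ℕ} (F : TensorField n k) (hF : IsAlternating F)
    (hd : ∀ idx, Differentiable ℝ fun x => F x idx) : IsAlternating (extD F) := by
  intro x
  refine alt_S (fun b v => pd (fun y => F y v) b x) ?_
  intro b v σ
  simp only
  have : (fun y => F y (v ∘ σ)) = fun y => ((Equiv.Perm.sign σ : ℤ) : ℝ) * F y v := by
    ext y; exact hF y v σ
  rw [this, pd_cmul _ _ _ _ (hd v x)]

theorem extD_cons {n q : ℕ} (c : Fin n) (f : TensorField n q) (x : Pt n) (v : Fin (q+1) → Fin n)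
    (h : ∀ m, v m ≠ c) : extD (eW c f) x (Fin.cons c v) = - extD f x v := by
  unfold extD
  rw [Fin.sum_univ_succ]
  have h0 : (fun y => eW c f y fun i => (Fin.cons c v : Fin (q+1+1) → Fin n) ((0 : Fin (q+1+1)).succAbove i)) = fun _ => 0 := by
    ext y
    apply eW_no
    intro m; simpa using h m
  rw [h0, pd_const, mul_zero, zero_add, ← Finset.sum_neg_distrib]
  refine Finset.sum_congr rfl fun m _ => ?_
  have h1 : (fun y => eW c f y fun i => (Fin.cons c v : Fin (q+1+1) → Fin n) (m.succ.succAbove i)) 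
      = fun y => f y fun i => v (m.succAbove i) := by
    ext y
    rw [← eW_cons c f y (fun i => v (m.succAbove i)) (fun i => h _)]
    congr 1
    ext i
    refine Fin.cases ?_ (fun i => ?_) i <;> simp
  rw [h1]
  simp [pow_succ]

theorem eW_diff {n q : ℕ} (c : Fin n) (f : TensorField n q) 
    (hd : ∀ idx, Differentiable ℝ fun x => f x idx) (idx) : Differentiable ℝ fun x => eW c f x idx := by
  unfold eW
  refine Differentiable.fun_sum fun m _ => ?_
  exact ((hd _).const_mul _).const_mul _

theorem closed_iff {n q : ℕ} [NeZero n] (f : TensorField n q) (hd : ∀ idx, Differentiable ℝ fun x => f x idx)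
    (hf_alt : IsAlternating f)
    (hf_tr : ∀ (x : Pt n) (v : Fin q → Fin n), (∃ i, (v i : ℕ) < 2) → f x v = 0)
    (hf_r : IndepOfR f) :
    (∀ x idx, extD (duWedge f) x idx = 0) ↔ TransClosed f := by
  rw [duWedge_eq]
  constructor
  · intro h x v hv
    have h1 := h x (Fin.cons 0 v)
    rw [extD_cons] at h1
    · have : extD f x v = 0 := by linarith
      exact this
    · intro m hm
      have := hv m
      rw [hm] at this
      simp at this
  · intro h x idx
    have halt := extD_alt (eW 0 f) (eW_alt 0 f hf_alt) (eW_diff 0 f hd)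
    by_cases hinj : Function.Injective idx
    swap
    · exact Alt.eq_zero' (halt x) hinj
    by_cases h0 : ∃ m, idx m = 0
    swap
    · push Not at h0
      refine Finset.sum_eq_zero fun m _ => ?_
      have : (fun y => eW 0 f y fun i => idx (m.succAbove i)) = fun _ => 0 := by
        ext y; exact eW_no _ _ _ _ fun i => h0 _
      rw [this, pd_const, mul_zero]
    obtain ⟨m, hm⟩ := h0
    have h1 := halt x idx (m.cycleRange.symm)
    have h2 : idx ∘ m.cycleRange.symm = Fin.cons 0 (fun i => idx (m.succAbove i)) := by
      ext i
      refine Fin.cases ?_ (fun i => ?_) i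
      · simp [hm]
      · simp
    rw [h2, extD_cons] at h1
    swap
    · intro i hi
      exact Fin.succAbove_ne m i (hinj (hi.trans hm.symm))
    have h3 : extD f x (fun i => idx (m.succAbove i)) = 0 := by
      generalize hw : (fun i => idx (m.succAbove i)) = w
      by_cases hw2 : ∀ i, 2 ≤ (w i : ℕ)
      · exact h x w hw2
      · push Not at hw2
        obtain ⟨i, hi⟩ := hw2
        refine Finset.sum_eq_zero fun j _ => ?_
        by_cases hij : i = j
        · subst hij
          rw [pd_r, mul_zero]
          · have : w i ≠ 0 := by
              rw [← hw]
              intro hi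
              exact Fin.succAbove_ne m i (hinj (hi.trans hm.symm))
            have : (w i : ℕ) ≠ 0 := by
              intro h; apply this; rw [Fin.ext_iff, Fin.val_zero]; exact h
            omega
          · intro y y' hy
            exact congrFun (hf_r y y' hy) _
        · have : (fun y => f y fun i => w (j.succAbove i)) = fun _ => 0 := by
            ext y
            apply hf_tr
            obtain ⟨l, hl⟩ := Fin.exists_succAbove_eq hij
            exact ⟨l, by rw [hl]; exact hi⟩
          rw [this, pd_const, mul_zero]
    rw [h3, neg_zero, eq_comm, mul_eq_zero] at h1
    rcases h1 with h1 | h1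
    · exact absurd h1 (by exact_mod_cast Units.ne_zero _)
    · exact h1

theorem val_one_of {n : ℕ} [NeZero n] (hn : 2 ≤ n) : ((1 : Fin n) : ℕ) = 1 := by
  rw [Fin.coe_ofNat_eq_mod, Nat.mod_eq_of_lt (by omega)]

theorem km_row1 {n : ℕ} [NeZero n] (hn : 2 ≤ n) (H : Pt n → ℝ) (W : Pt n → Fin n → ℝ) (hT : MetricField n)
    (x : Pt n) (a : Fin n) : kundtMetric H W hT x a 1 = if a = 0 then 1 else 0 := by
  have h1 := val_one_of hn
  have h0 : a = 0 ↔ (a : ℕ) = 0 := by rw [Fin.ext_iff, Fin.val_zero]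
  unfold kundtMetric
  simp only [Matrix.of_apply, h1, h0]
  by_cases h : (a : ℕ) = 0 <;> simp [h]

theorem km_det {n : ℕ} [NeZero n] (hn : 2 ≤ n) (H : Pt n → ℝ) (W : Pt n → Fin n → ℝ) (hT : MetricField n)
    (x : Pt n) (h2 : ∀ (a b : Fin n), ((a : ℕ) < 2 ∨ (b : ℕ) < 2) → hT x a b = (if a = b then 1 else 0)) :
    (kundtMetric H W hT x).det = - (hT x).det := by
  have h1 := val_one_of hn
  have h0 : ∀ a : Fin n, a = 0 ↔ (a : ℕ) = 0 := by intro a; rw [Fin.ext_iff, Fin.val_zero]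
  have h1' : ∀ a : Fin n, a = 1 ↔ (a : ℕ) = 1 := by intro a; rw [Fin.ext_iff, h1]
  have hne : (0 : Fin n) ≠ 1 := by rw [Ne, Fin.ext_iff, h1, Fin.val_zero]; omega
  set g := kundtMetric H W hT x with hg
  set c : Fin n → ℝ := fun i => if (i : ℕ) = 0 then 2 * H x else if (i : ℕ) = 1 then 0 else W x i with hc
  set d : Fin n → ℝ := fun i => if (i : ℕ) < 2 then 0 else W x i with hd
  set M : Matrix (Fin n) (Fin n) ℝ := Matrix.of fun i j => hT x i j + c i * hT x 1 j with hM
  have e1 : M.det = (hT x).det := 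
    Matrix.det_eq_of_forall_row_eq_smul_add_const c 1 (by simp only [hc, h1]; norm_num) (fun i j => rfl)
  have e2 : (g.submatrix id (Equiv.swap (0 : Fin n) 1)).det = M.det := by
    rw [← Matrix.det_transpose, ← Matrix.det_transpose M]
    refine Matrix.det_eq_of_forall_row_eq_smul_add_const d 0 (by simp [hd]) (fun j i => ?_)
    simp only [Matrix.transpose_apply, Matrix.submatrix_apply, id, hM, Matrix.of_apply]
    rw [h2 1 j (by left; omega), h2 1 0 (by left; omega), h2 i 0 (by right; simp), if_neg hne.symm]
    by_cases hj0 : j = 0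
    · subst hj0
      rw [Equiv.swap_apply_left, hg, km_row1 hn, h2 i 0 (by right; simp), if_neg hne.symm]
      simp [hd]
    by_cases hj1 : j = 1
    · subst hj1
      rw [Equiv.swap_apply_right, h2 i 1 (by right; omega)]
      simp only [hg, kundtMetric, Matrix.of_apply, hc, hd, h0, h1', h1, Fin.val_zero]
      by_cases hi0 : (i : ℕ) = 0
      · simp [hi0]
      by_cases hi1 : (i : ℕ) = 1
      · simp [hi1]
      simp [hi0, hi1]
    · rw [Equiv.swap_apply_of_ne_of_ne hj0 hj1, if_neg (Ne.symm hj1)]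
      rw [h0] at hj0
      rw [h1'] at hj1
      have hj2 : ¬ (j : ℕ) < 2 := by omega
      simp only [hg, kundtMetric, Matrix.of_apply, hc, hd, h0]
      by_cases hi0 : (i : ℕ) = 0
      · have : hT x i j = 0 := by
          rw [h2 i j (by left; omega), if_neg]; rintro rfl; exact hj0 hi0
        simp [hi0, hj0, hj1, hj2, this]
      by_cases hi1 : (i : ℕ) = 1
      · have : hT x i j = 0 := by
          rw [h2 i j (by left; omega), if_neg]; rintro rfl; exact hj1 hi1
        simp [hi1, hj0, hj2, this]
      simp [hi0, hi1, hj0, hj1]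
  rw [Matrix.det_permute', Equiv.Perm.sign_swap hne] at e2
  push_cast at e2
  linarith

theorem inv_col {n : ℕ} (A : Matrix (Fin n) (Fin n) ℝ) (hA : IsUnit A.det) (u v : Fin n → ℝ)
    (h : A.mulVec u = v) : A⁻¹.mulVec v = u := by
  rw [← h, Matrix.mulVec_mulVec, Matrix.nonsing_inv_mul _ hA, Matrix.one_mulVec]

theorem hinv {n : ℕ} (A : Matrix (Fin n) (Fin n) ℝ) (hA : IsUnit A.det)
    (h2 : ∀ (a b : Fin n), ((a : ℕ) < 2 ∨ (b : ℕ) < 2) → A a b = (if a = b then 1 else 0))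
    (hs : A.IsSymm) (a b : Fin n) (hab : (a : ℕ) < 2 ∨ (b : ℕ) < 2) : 
    A⁻¹ a b = if a = b then 1 else 0 := by
  have key : ∀ a b : Fin n, (b : ℕ) < 2 → A⁻¹ a b = if a = b then 1 else 0 := by
    intro a b hb
    have := inv_col A hA (Pi.single b 1) (Pi.single b 1) (by
      rw [Matrix.mulVec_single_one]
      ext i
      rw [Matrix.col_apply, h2 i b (Or.inr hb), Pi.single_apply])
    rw [Matrix.mulVec_single_one] at this
    have := congrFun this a
    rwa [Matrix.col_apply, Pi.single_apply] at this
  rcases hab with h | h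
  · have hsi : (A⁻¹).transpose = A⁻¹ := by rw [Matrix.transpose_nonsing_inv, hs.eq]
    rw [← hsi, Matrix.transpose_apply, key b a h]
    simp only [eq_comm]
  · exact key a b h

theorem ginv0 {n : ℕ} [NeZero n] (hn : 2 ≤ n) (H : Pt n → ℝ) (W : Pt n → Fin n → ℝ) (hT : MetricField n)
    (x : Pt n) (hu : IsUnit (kundtMetric H W hT x).det) (a : Fin n) : 
    (kundtMetric H W hT x)⁻¹ a 0 = if a = 1 then 1 else 0 := by
  have := inv_col _ hu (Pi.single 1 1) (Pi.single 0 1) (by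
      rw [Matrix.mulVec_single_one]
      ext i
      rw [Matrix.col_apply, km_row1 hn, Pi.single_apply])
  rw [Matrix.mulVec_single_one] at this
  have := congrFun this a
  rwa [Matrix.col_apply, Pi.single_apply] at this

theorem ginvT {n : ℕ} [NeZero n] (hn : 2 ≤ n) (H : Pt n → ℝ) (W : Pt n → Fin n → ℝ) (hT : MetricField n)
    (x : Pt n) (h2 : ∀ (a b : Fin n), ((a : ℕ) < 2 ∨ (b : ℕ) < 2) → hT x a b = (if a = b then 1 else 0))
    (hs : (hT x).IsSymm) (hh : IsUnit (hT x).det)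
    (hu : IsUnit (kundtMetric H W hT x).det) (a j : Fin n) (ha : a ≠ 1) (hj : 2 ≤ (j : ℕ)) : 
    (kundtMetric H W hT x)⁻¹ a j = (hT x)⁻¹ a j := by
  have h1 := val_one_of hn
  set w : Fin n → ℝ := fun i => (hT x)⁻¹ i j with hw
  have hw2 : ∀ i : Fin n, (i : ℕ) < 2 → w i = 0 := by
    intro i hi
    rw [hw]; simp only
    rw [hinv _ hh h2 hs i j (Or.inl hi), if_neg]
    rintro rfl; omega
  have hhw : ∀ i, ∑ b, hT x i b * w b = if i = j then 1 else 0 := by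
    intro i
    have := congrFun (congrFun (Matrix.mul_nonsing_inv _ hh) i) j
    rw [Matrix.mul_apply, Matrix.one_apply] at this
    exact this
  set s := ∑ b, kundtMetric H W hT x 0 b * w b with hsdef
  have := inv_col _ hu w (Pi.single j 1 + s • Pi.single 0 1) (by
    ext i
    simp only [Matrix.mulVec, dotProduct, Pi.add_apply, Pi.smul_apply, Pi.single_apply, smul_eq_mul]
    by_cases hi0 : i = 0
    · subst hi0
      have : (0 : Fin n) ≠ j := by rintro rfl; simp at hj
      simp [this, hsdef]
    · rw [if_neg hi0, mul_zero, add_zero, ← hhw i]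
      refine Finset.sum_congr rfl fun b _ => ?_
      by_cases hb : (b : ℕ) < 2
      · rw [hw2 b hb]; simp
      · congr 1
        have hi0' : (i : ℕ) ≠ 0 := by
          intro h; apply hi0; rw [Fin.ext_iff, Fin.val_zero]; exact h
        have hb0 : (b : ℕ) ≠ 0 := by omega
        have hb1 : (b : ℕ) ≠ 1 := by omega
        simp only [kundtMetric, Matrix.of_apply, hi0', hb0, hb1, false_and, and_false, if_false, or_false]
        by_cases hi1 : (i : ℕ) = 1
        · rw [if_pos hi1, h2 i b (Or.inl (by omega)), if_neg]
          rintro rfl; omega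
        · rw [if_neg hi1])
  rw [Matrix.mulVec_add, Matrix.mulVec_smul, Matrix.mulVec_single_one, Matrix.mulVec_single_one] at this
  have := congrFun this a
  simp only [Pi.add_apply, Pi.smul_apply, Matrix.col_apply, smul_eq_mul] at this
  rw [ginv0 hn _ _ _ _ hu, if_neg ha] at this
  rw [hw] at this
  simpa using this

theorem raise_alt {n k : ℕ} (g : MetricField n) (T : TensorField n k) (hT : IsAlternating T) :
    IsAlternating (raiseAll g T) := by
  intro x v σ
  unfold raiseAll
  rw [Finset.mul_sum]
  refine Fintype.sum_equiv (Equiv.arrowCongr σ (Equiv.refl _)) _ _ ?_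
  intro j
  have e : (Equiv.arrowCongr σ (Equiv.refl (Fin n))) j = j ∘ σ.symm := by
    ext m; simp [Equiv.arrowCongr]
  rw [e]
  have h1 := hT x (j ∘ σ.symm) σ
  rw [Function.comp_assoc, Equiv.symm_comp_self, Function.comp_id] at h1
  rw [h1]
  have e2 : ∏ m, (g x)⁻¹ ((v ∘ σ) m) (j m) = ∏ m, (g x)⁻¹ (v m) ((j ∘ σ.symm) m) := by
    refine Fintype.prod_equiv σ _ _ ?_
    intro m
    simp
  rw [e2]; ring

theorem raise_eW {n q : ℕ} [NeZero n] (hn : 2 ≤ n) (H : Pt n → ℝ) (W : Pt n → Fin n → ℝ) (hT : MetricField n)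
    (x : Pt n) (h2 : ∀ (a b : Fin n), ((a : ℕ) < 2 ∨ (b : ℕ) < 2) → hT x a b = (if a = b then 1 else 0))
    (hs : (hT x).IsSymm) (hh : IsUnit (hT x).det)
    (f : TensorField n q) (hf_alt : IsAlternating f)
    (hf_tr : ∀ (x : Pt n) (v : Fin q → Fin n), (∃ i, (v i : ℕ) < 2) → f x v = 0) (a : Fin (q+1) → Fin n) :
    raiseAll (kundtMetric H W hT) (eW 0 f) x a = eW 1 (raiseAll hT f) x a := by
  have hu : IsUnit (kundtMetric H W hT x).det := by
    rw [km_det hn H W hT x h2]; exact hh.neg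
  have step1 : raiseAll (kundtMetric H W hT) (eW 0 f) x a 
      = eW 1 (raiseAll (kundtMetric H W hT) f) x a := by
    unfold eW
    conv_lhs => unfold raiseAll
    simp only [Finset.mul_sum]
    rw [Finset.sum_comm]
    refine Finset.sum_congr rfl fun m _ => ?_
    rw [← (Fin.insertNthEquiv (fun _ => Fin n) m).sum_comp, Fintype.sum_prod_type]
    rw [Finset.sum_eq_single (0 : Fin n)]
    · unfold raiseAll
      rw [Finset.mul_sum, Finset.mul_sum]
      refine Finset.sum_congr rfl fun v _ => ?_
      rw [Fin.prod_univ_succAbove _ m]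
      simp only [Fin.insertNthEquiv_apply, Fin.insertNth_apply_same, Fin.insertNth_apply_succAbove]
      rw [ginv0 hn _ _ _ _ hu]
      simp only [if_true, one_mul]
      ring
    · intro b _ hb
      refine Finset.sum_eq_zero fun v _ => ?_
      simp [hb]
    · simp
  rw [step1]
  by_cases hinj : Function.Injective a
  swap
  · rw [Alt.eq_zero' (eW_alt 1 _ (raise_alt _ _ hf_alt) x) hinj, 
      Alt.eq_zero' (eW_alt 1 _ (raise_alt _ _ hf_alt) x) hinj]
  unfold eW
  refine Finset.sum_congr rfl fun m _ => ?_
  by_cases hm : a m = 1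
  swap
  · simp [hm]
  congr 2
  unfold raiseAll
  refine Finset.sum_congr rfl fun v _ => ?_
  by_cases hv : ∃ i, (v i : ℕ) < 2
  · rw [hf_tr x v hv]; simp
  push Not at hv
  congr 1
  refine Finset.prod_congr rfl fun i _ => ?_
  refine ginvT hn H W hT x h2 hs hh hu _ _ ?_ (hv i)
  intro hi
  exact Fin.succAbove_ne m i (hinj (hi.trans hm.symm))

/-- Levi-Civita symbol on a split index list. -/
def eps {p r : ℕ} (a : Fin p → Fin (p + r)) (idx : Fin r → Fin (p + r)) : ℝ :=
  ((permSign (Fin.append a idx) : ℤ) : ℝ)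

theorem elim_fse {p r : ℕ} {α : Type*} (a : Fin p → α) (b : Fin r → α) :
    Sum.elim a b = Fin.append a b ∘ finSumFinEquiv := by
  ext i
  rcases i with i | i <;> simp

theorem append_fse {p r : ℕ} {α : Type*} (a : Fin p → α) (b : Fin r → α) :
    Fin.append a b = Sum.elim a b ∘ finSumFinEquiv.symm := by
  rw [elim_fse, Function.comp_assoc]; simp

theorem permSign_elim {k : ℕ} {β : Type*} [Fintype β] [DecidableEq β] (w : β → Fin k) (θ : Fin k ≃ β) 
    (τ : Equiv.Perm β) : permSign ((w ∘ τ) ∘ θ) = Equiv.Perm.sign τ * permSign (w ∘ θ) := by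
  have : (w ∘ τ) ∘ θ = (w ∘ θ) ∘ (θ.symm.permCongr τ) := by
    ext i; simp
  rw [this, permSign_comp, Equiv.Perm.sign_permCongr]

theorem eps_left {p r : ℕ} (idx : Fin r → Fin (p + r)) : Alt (fun a : Fin p → Fin (p + r) => eps a idx) := by
  intro a σ
  simp only [eps]
  have : Sum.elim (a ∘ σ) idx = Sum.elim a idx ∘ (Equiv.sumCongr σ (Equiv.refl _)) := by
    ext i; rcases i with i | i <;> simp
  rw [append_fse, append_fse, this, permSign_elim]
  have h := Equiv.Perm.sign_sumCongr σ (1 : Equiv.Perm (Fin r))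
  rw [Equiv.Perm.sign_one, mul_one] at h
  have h' : Equiv.Perm.sign (σ.sumCongr (Equiv.refl (Fin r))) = Equiv.Perm.sign σ := h
  rw [h']
  push_cast; rfl

theorem eps_right {p r : ℕ} (a : Fin p → Fin (p + r)) : Alt (fun idx : Fin r → Fin (p + r) => eps a idx) := by
  intro idx σ
  simp only [eps]
  have : Sum.elim a (idx ∘ σ) = Sum.elim a idx ∘ (Equiv.sumCongr (Equiv.refl _) σ) := by
    ext i; rcases i with i | i <;> simp
  rw [append_fse, append_fse, this, permSign_elim]
  have h := Equiv.Perm.sign_sumCongr (1 : Equiv.Perm (Fin p)) σ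
  rw [Equiv.Perm.sign_one, one_mul] at h
  have h' : Equiv.Perm.sign (Equiv.sumCongr (Equiv.refl (Fin p)) σ) = Equiv.Perm.sign σ := h
  rw [h']
  push_cast; rfl

theorem eps_ne {p r : ℕ} {a : Fin p → Fin (p + r)} {idx : Fin r → Fin (p + r)} :
    eps a idx ≠ 0 ↔ Function.Bijective (Sum.elim a idx) := by
  unfold eps
  rw [Int.cast_ne_zero, permSign_ne, append_fse, finSumFinEquiv.symm.bijective.of_comp_iff]

/-- reshuffling equivalence -/
def thetaFun (q s : ℕ) : Fin (q+1+(s+1)) → Fin q ⊕ Fin (s+1+1) :=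
  Fin.append (Fin.cons (Sum.inr 0) Sum.inl) (fun i => Sum.inr i.succ)

theorem thetaFun_bij (q s : ℕ) : Function.Bijective (thetaFun q s) := by
  rw [Fintype.bijective_iff_surjective_and_card]
  constructor
  · intro y
    rcases y with i | i
    · exact ⟨Fin.castAdd _ i.succ, by simp [thetaFun]⟩
    · refine Fin.cases ?_ (fun i => ?_) i
      · exact ⟨Fin.castAdd _ 0, by simp [thetaFun]⟩
      · exact ⟨Fin.natAdd _ i, by simp [thetaFun]⟩
  · simp; omega

theorem theta_comp {q s : ℕ} {α : Type*} (c : Fin q → α) (j : Fin (s+1+1) → α) :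
    Fin.append (Fin.cons (j 0) c : Fin (q+1) → α) (fun i => j i.succ) = Sum.elim c j ∘ thetaFun q s := by
  ext i
  refine Fin.addCases (fun i => ?_) (fun i => ?_) i
  · refine Fin.cases ?_ (fun i => ?_) i <;> simp [thetaFun]
  · simp [thetaFun]

/-- The sign of `(c, j)`. -/
def Phi {q s : ℕ} (c : Fin q → Fin (q+1+(s+1))) (j : Fin (s+1+1) → Fin (q+1+(s+1))) : ℝ :=
  eps (Fin.cons (j 0) c) (fun i => j i.succ)

theorem Phi_alt {q s : ℕ} (c : Fin q → Fin (q+1+(s+1))) : Alt (Phi (s := s) c) := by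
  intro j σ
  unfold Phi eps
  rw [theta_comp c (j ∘ σ), theta_comp c j]
  have : Sum.elim c (j ∘ σ) = Sum.elim c j ∘ (Equiv.sumCongr (Equiv.refl _) σ) := by
    ext i; rcases i with i | i <;> simp
  rw [this]
  have h3 := permSign_elim (Sum.elim c j) (Equiv.ofBijective _ (thetaFun_bij q s)) 
    (Equiv.sumCongr (Equiv.refl _) σ)
  rw [show (⇑(Equiv.ofBijective (thetaFun q s) (thetaFun_bij q s))) = thetaFun q s from rfl] at h3
  rw [h3]
  have h := Equiv.Perm.sign_sumCongr (1 : Equiv.Perm (Fin q)) σ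
  rw [Equiv.Perm.sign_one, one_mul] at h
  have h' : Equiv.Perm.sign (Equiv.sumCongr (Equiv.refl (Fin q)) σ) = Equiv.Perm.sign σ := h
  rw [h']
  push_cast; rfl

theorem Phi_ne {q s : ℕ} {c : Fin q → Fin (q+1+(s+1))} {j : Fin (s+1+1) → Fin (q+1+(s+1))} 
    (h : Function.Bijective (Sum.elim c j)) : Phi c j ≠ 0 := by
  unfold Phi eps
  rw [Int.cast_ne_zero, permSign_ne, theta_comp]
  exact h.comp (thetaFun_bij q s)

theorem Phi_m {q s : ℕ} (c : Fin q → Fin (q+1+(s+1))) (j : Fin (s+1+1) → Fin (q+1+(s+1)))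
    (m : Fin (s+1+1)) : 
    (-1 : ℝ) ^ (m : ℕ) * eps (Fin.cons (j m) c) (fun i => j (m.succAbove i)) = Phi c j := by
  have h := Phi_alt c j m.cycleRange.symm
  have e : Phi c (j ∘ m.cycleRange.symm) = eps (Fin.cons (j m) c) (fun i => j (m.succAbove i)) := by
    unfold Phi
    simp
  rw [← e, h, Equiv.Perm.sign_symm, Fin.sign_cycleRange]
  push_cast
  rw [← mul_assoc, ← mul_pow]; simp

theorem same_range {p r : ℕ} {α : Type*} {a a0 : Fin p → α} {b : Fin r → α} 
    (h : Function.Bijective (Sum.elim a b)) (h0 : Function.Bijective (Sum.elim a0 b)) :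
    ∃ σ : Equiv.Perm (Fin p), a = a0 ∘ σ := by
  have ex : ∀ i, ∃ k, a0 k = a i := by
    intro i
    obtain ⟨y, hy⟩ := h0.2 (a i)
    rcases y with k | k
    · exact ⟨k, hy⟩
    · have : Sum.elim a b (Sum.inr k) = Sum.elim a b (Sum.inl i) := hy
      exact absurd (h.1 this) (by simp)
  choose t ht using ex
  have tinj : Function.Injective t := by
    intro i k hik
    have : Sum.elim a b (Sum.inl i) = Sum.elim a b (Sum.inl k) := by
      simp only [Sum.elim_inl]; rw [← ht i, ← ht k, hik]
    exact Sum.inl_injective (h.1 this)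
  refine ⟨Equiv.ofBijective t (Finite.injective_iff_bijective.mp tinj), ?_⟩
  ext i
  simp [ht]

theorem exists_compl {a b n : ℕ} (h : a + b = n) (c : Fin a → Fin n) (hc : Function.Injective c) :
    ∃ j : Fin b → Fin n, Function.Bijective (Sum.elim c j) := by
  classical
  have hcard : Fintype.card {x // x ∉ Set.range c} = b := by
    have := Fintype.card_compl_set (Set.range c)
    have h2 : Fintype.card (Set.range c) = a := by 
      rw [Set.card_range_of_injective hc, Fintype.card_fin]
    rw [h2, Fintype.card_fin] at this
    have h3 : Fintype.card {x // x ∉ Set.range c} = Fintype.card ↑(Set.range c)ᶜ := 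
      Fintype.card_congr (Equiv.refl _)
    omega
  let e : Fin b ≃ {x // x ∉ Set.range c} := (Fintype.equivFinOfCardEq hcard).symm
  refine ⟨fun i => (e i).1, ?_⟩
  rw [Fintype.bijective_iff_injective_and_card]
  constructor
  · apply Function.Injective.sumElim hc
    · intro x y hxy; exact e.injective (Subtype.ext hxy)
    · intro x y hxy
      exact (e y).2 ⟨x, hxy⟩
  · simp [h]

theorem hodge_alg {q s : ℕ} (Q : Fin (q+1+(s+1)) → (Fin (q+1) → Fin (q+1+(s+1))) → ℝ)
    (hQ : ∀ b, Alt (Q b)) (c : Fin q → Fin (q+1+(s+1))) (j : Fin (s+1+1) → Fin (q+1+(s+1)))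
    (h : Function.Bijective (Sum.elim c j)) :
    ∑ m : Fin (s+1+1), (-1 : ℝ) ^ (m : ℕ) * ((1 / (Nat.factorial (q+1) : ℝ)) *
      ∑ a, Q (j m) a * eps a (fun i => j (m.succAbove i)))
    = Phi c j * ∑ b, Q b (Fin.cons b c) := by
  have hj : Function.Injective j := fun x y hxy => Sum.inr_injective (h.1 (a₁ := Sum.inr x) (a₂ := Sum.inr y) hxy)
  have h1 : ∀ m : Fin (s+1+1), (-1 : ℝ) ^ (m : ℕ) * ((1 / (Nat.factorial (q+1) : ℝ)) *
      ∑ a, Q (j m) a * eps a (fun i => j (m.succAbove i))) = Phi c j * Q (j m) (Fin.cons (j m) c) := by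
    intro m
    have hne : eps (Fin.cons (j m) c) (fun i => j (m.succAbove i)) ≠ 0 := by
      have := Phi_ne h
      rw [← Phi_m c j m] at this
      exact right_ne_zero_of_mul this
    have hbij := eps_ne.mp hne
    rw [sum_alt_alt (Q (j m)) (fun a => eps a (fun i => j (m.succAbove i))) (hQ _) (eps_left _) 
      (Fin.cons (j m) c) ?_ ?_]
    · rw [← Phi_m c j m]
      have : (Nat.factorial (q+1) : ℝ) ≠ 0 := by exact_mod_cast Nat.factorial_ne_zero _
      field_simp
    · intro x y hxy
      exact Sum.inl_injective (hbij.1 (a₁ := Sum.inl x) (a₂ := Sum.inl y) hxy)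
    · intro a ha
      exact same_range (eps_ne.mp ha) hbij
  rw [Finset.sum_congr rfl (fun m _ => h1 m), ← Finset.mul_sum]
  congr 1
  classical
  rw [← Finset.sum_image (s := Finset.univ) (g := j) (f := fun b => Q b (Fin.cons b c)) (fun _ _ _ _ h => hj h)]
  apply Finset.sum_subset (Finset.subset_univ _)
  intro b _ hb
  obtain ⟨y, hy⟩ := h.2 b
  rcases y with i | i
  · apply (hQ b).eq_zero (i := 0) (j := i.succ) (Fin.succ_ne_zero i).symm
    simpa using hy.symm
  · exact absurd (Finset.mem_image.mpr ⟨i, Finset.mem_univ _, hy⟩) hb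

theorem prod_diff {n : ℕ} {ι : Type*} [Fintype ι] (f : ι → Pt n → ℝ)
    (h : ∀ i, Differentiable ℝ (f i)) : Differentiable ℝ fun x => ∏ i, f i x := by
  classical
  suffices H : ∀ s : Finset ι, Differentiable ℝ fun x => ∏ i ∈ s, f i x from H _
  intro s
  induction s using Finset.induction_on with
  | empty => simp
  | insert a s ha ih =>
    simp only [Finset.prod_insert ha]
    exact (h a).mul ih

theorem det_diff {n : ℕ} (A : Pt n → Matrix (Fin n) (Fin n) ℝ)
    (h : ∀ a b, Differentiable ℝ fun x => A x a b) : Differentiable ℝ fun x => (A x).det := by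
  simp only [Matrix.det_apply']
  refine Differentiable.fun_sum fun σ _ => ?_
  refine Differentiable.const_mul ?_ _
  exact prod_diff (f := fun i x => A x (σ i) i) fun i => h _ _

theorem inv_diff {n : ℕ} (A : Pt n → Matrix (Fin n) (Fin n) ℝ)
    (h : ∀ a b, Differentiable ℝ fun x => A x a b) (hp : ∀ x, (A x).det ≠ 0) (a b : Fin n) :
    Differentiable ℝ fun x => (A x)⁻¹ a b := by
  have : (fun x => (A x)⁻¹ a b) = fun x => ((A x).det)⁻¹ * (A x).adjugate a b := by
    ext x
    rw [Matrix.inv_def, Matrix.smul_apply, Ring.inverse_eq_inv', smul_eq_mul]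
  rw [this]
  refine Differentiable.mul ((det_diff A h).inv hp) ?_
  simp only [Matrix.adjugate_apply]
  refine det_diff _ ?_
  intro i j
  simp only [Matrix.updateRow_apply]
  split_ifs
  · exact differentiable_const _
  · exact h _ _

/-- The densitized raised transverse form. -/
def Rf {n q : ℕ} (hT : MetricField n) (f : TensorField n q) : TensorField n q :=
  fun y v => Real.sqrt (hT y).det * raiseAll hT f y v

theorem Rf_diff {n q : ℕ} (hT : MetricField n) (h : IsTransverseMetric hT) (f : TensorField n q)
    (hf : ∀ idx, Differentiable ℝ fun x => f x idx) (v) : Differentiable ℝ fun x => Rf hT f x v := by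
  obtain ⟨_, _, h3, _, h5⟩ := h
  have hd : ∀ a b, Differentiable ℝ fun x => hT x a b := fun a b => (h3 a b).differentiable (by simp)
  have hp : ∀ x, (hT x).det ≠ 0 := fun x => (h5 x).det_pos.ne'
  unfold Rf raiseAll
  refine Differentiable.mul ((det_diff _ hd).sqrt hp) ?_
  refine Differentiable.fun_sum fun j _ => ?_
  refine Differentiable.mul ?_ (hf j)
  exact prod_diff (f := fun i x => (hT x)⁻¹ (v i) (j i))
    fun i => inv_diff _ hd hp _ _

theorem Rf_alt {n q : ℕ} (hT : MetricField n) (f : TensorField n q) (hf : IsAlternating f) : 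
    IsAlternating (Rf hT f) := by
  intro x v σ
  unfold Rf
  rw [raise_alt hT f hf x v σ]; ring

theorem Rf_indep {n q : ℕ} (hT : MetricField n) (f : TensorField n q) (h : IndepOfR hT) (hf : IndepOfR f) : 
    IndepOfR (Rf hT f) := by
  intro x x' hx
  ext v
  simp only [Rf, raiseAll, h x x' hx, hf x x' hx]

theorem Rf_tr {n q : ℕ} (hT : MetricField n) (h : IsTransverseMetric hT) (f : TensorField n q) 
    (hf_tr : ∀ (x : Pt n) (v : Fin q → Fin n), (∃ i, (v i : ℕ) < 2) → f x v = 0)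
    (x : Pt n) (v : Fin q → Fin n) (hv : ∃ i, (v i : ℕ) < 2) : Rf hT f x v = 0 := by
  obtain ⟨i, hi⟩ := hv
  unfold Rf raiseAll
  rw [Finset.sum_eq_zero, mul_zero]
  intro j _
  by_cases hj : v i = j i
  · rw [hf_tr x j ⟨i, by rw [← hj]; exact hi⟩, mul_zero]
  · rw [Finset.prod_eq_zero (Finset.mem_univ i), zero_mul]
    rw [hinv _ (isUnit_iff_ne_zero.mpr (h.2.2.2.2 x).det_pos.ne') (h.1 x) (h.2.1 x) _ _ (Or.inl hi), if_neg hj]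

theorem div_eW {n q : ℕ} [NeZero n] (hn : 2 ≤ n) (R : TensorField n (q+1)) 
    (hd : ∀ v, Differentiable ℝ fun x => R x v) (hr : IndepOfR R) (x : Pt n) (c : Fin (q+1) → Fin n) :
    ∑ b, pd (fun y => eW 1 R y (Fin.cons b c)) b x = 
    ∑ i : Fin (q+1), (-1 : ℝ) ^ ((i : ℕ) + 1) * ((if c i = 1 then 1 else 0) * 
      ∑ b, pd (fun y => R y (Fin.cons b (fun k => c (i.succAbove k)))) b x) := by
  have h1 : ∀ b, pd (fun y => eW 1 R y (Fin.cons b c)) b x = 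
      ∑ i : Fin (q+1), (-1 : ℝ) ^ ((i : ℕ) + 1) * ((if c i = 1 then 1 else 0) * 
      pd (fun y => R y (Fin.cons b (fun k => c (i.succAbove k)))) b x) := by
    intro b
    unfold eW
    rw [pd_sum _ _ _ _ (fun m _ => (((hd _).const_mul _).const_mul _) x)]
    rw [Fin.sum_univ_succ]
    have e0 : pd (fun y => (-1 : ℝ) ^ (((0 : Fin (q+1+1)) : ℕ)) * ((if (Fin.cons b c : Fin (q+1+1) → Fin n) 0 = 1 then 1 else 0) *
        R y fun i => (Fin.cons b c : Fin (q+1+1) → Fin n) ((0 : Fin (q+1+1)).succAbove i))) b x = 0 := by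
      rw [pd_cmul _ _ _ _ (((hd _).const_mul _) x), pd_cmul _ _ _ _ ((hd _) x)]
      by_cases hb : b = 1
      · subst hb
        rw [pd_r _ _ (val_one_of hn)]
        · simp
        · intro y y' hy; exact congrFun (hr y y' hy) _
      · simp [hb]
    rw [e0, zero_add]
    refine Finset.sum_congr rfl fun i _ => ?_
    rw [pd_cmul _ _ _ _ (((hd _).const_mul _) x), pd_cmul _ _ _ _ ((hd _) x)]
    have : (fun k => (Fin.cons b c : Fin (q+1+1) → Fin n) (i.succ.succAbove k)) = Fin.cons b (fun k => c (i.succAbove k)) := by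
      ext k
      refine Fin.cases ?_ (fun k => ?_) k <;> simp
    rw [this]
    simp
  simp only [h1]
  rw [Finset.sum_comm]
  refine Finset.sum_congr rfl fun i _ => ?_
  simp only [Finset.mul_sum]

theorem extD_hodgelike {q s : ℕ} (P : TensorField (q+1+(s+1)) (q+1)) (hP : IsAlternating P)
    (hd : ∀ v, Differentiable ℝ fun x => P x v) :
    (∀ x j, extD (fun y (idx : Fin (s+1) → Fin (q+1+(s+1))) => (1 / (Nat.factorial (q+1) : ℝ)) * ∑ a, P y a * eps a idx) x j = 0)
    ↔ ∀ x c, Function.Injective c → ∑ b, pd (fun y => P y (Fin.cons b c)) b x = 0 := by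
  have hQ : ∀ x b, Alt (fun a => pd (fun y => P y a) b x) := by
    intro x b v σ
    simp only
    have : (fun y => P y (v ∘ σ)) = fun y => ((Equiv.Perm.sign σ : ℤ) : ℝ) * P y v := by
      ext y; exact hP y v σ
    rw [this, pd_cmul _ _ _ _ (hd v x)]
  have key : ∀ x (c : Fin q → Fin (q+1+(s+1))) (j : Fin (s+1+1) → Fin (q+1+(s+1))), Function.Bijective (Sum.elim c j) → 
      extD (fun y (idx : Fin (s+1) → Fin (q+1+(s+1))) => (1 / (Nat.factorial (q+1) : ℝ)) * ∑ a, P y a * eps a idx) x j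
      = Phi c j * ∑ b, pd (fun y => P y (Fin.cons b c)) b x := by
    intro x c j hcj
    rw [← hodge_alg (fun b a => pd (fun y => P y a) b x) (hQ x) c j hcj]
    unfold extD
    refine Finset.sum_congr rfl fun m _ => ?_
    congr 1
    rw [pd_cmul]
    · congr 1
      rw [pd_sum]
      · refine Finset.sum_congr rfl fun a _ => ?_
        have : (fun y => P y a * eps a (fun i => j (m.succAbove i))) = fun y => eps a (fun i => j (m.succAbove i)) * P y a := by
          ext y; ring
        rw [this, pd_cmul _ _ _ _ (hd a x), mul_comm]
      · intro a _; exact (hd a x).mul_const _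
    · exact DifferentiableAt.fun_sum fun a _ => (hd a x).mul_const _
  constructor
  · intro h x c hc
    obtain ⟨j, hj⟩ := exists_compl (a := q) (b := s+1+1) (n := q+1+(s+1)) (by omega) c hc
    have := h x j
    rw [key x c j hj] at this
    exact (mul_eq_zero.mp this).resolve_left (Phi_ne hj)
  · intro h x j
    by_cases hj : Function.Injective j
    · obtain ⟨c, hc⟩ := exists_compl (a := s+1+1) (b := q) (n := q+1+(s+1)) (by omega) j hj
      have hc' : Function.Bijective (Sum.elim c j) := by
        have : Sum.elim c j = Sum.elim j c ∘ Equiv.sumComm _ _ := by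
          ext i; rcases i with i | i <;> simp
        rw [this]
        exact hc.comp (Equiv.bijective _)
      rw [key x c j hc', h x c, mul_zero]
      intro a b hab
      exact Sum.inl_injective (hc'.1 (a₁ := Sum.inl a) (a₂ := Sum.inl b) hab)
    · refine Alt.eq_zero' (extD_alt _ ?_ ?_ x) hj
      · intro y idx σ
        have := fun a => eps_right a idx σ
        simp only at this
        simp only [this, Finset.mul_sum]
        refine Finset.sum_congr rfl fun a _ => ?_
        ring
      · intro idx
        exact Differentiable.const_mul (Differentiable.fun_sum fun a _ => (hd a).mul_const _) _

theorem coclosed_iff {q s : ℕ} [NeZero (q+1+1+(s+1))] [NeZero (q+1)]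
    (D : DegKundtData (q+1+1+(s+1))) (hD : IsTransverseMetric D.hT)
    (f : TensorField (q+1+1+(s+1)) (q+1)) (hd : ∀ idx, Differentiable ℝ fun x => f x idx)
    (hf_alt : IsAlternating f)
    (hf_tr : ∀ (x : Pt (q+1+1+(s+1))) (v : Fin (q+1) → Fin (q+1+1+(s+1))), (∃ i, (v i : ℕ) < 2) → f x v = 0)
    (hf_r : IndepOfR f) :
    (∀ x idx, extD (hodge (rfl : q+1+1+(s+1) = q+1+1+(s+1)) D.metric (duWedge f)) x idx = 0) ↔ TransCoclosed D.hT f := by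
  have hn : 2 ≤ q+1+1+(s+1) := by omega
  have hRd := Rf_diff D.hT hD f hd
  have hRa := Rf_alt D.hT f hf_alt
  have hRr := Rf_indep D.hT f hD.2.2.2.1 hf_r
  have hRt := Rf_tr D.hT hD f hf_tr
  have hh : hodge (rfl : q+1+1+(s+1) = q+1+1+(s+1)) D.metric (duWedge f) = 
      fun y (idx : Fin (s+1) → Fin (q+1+1+(s+1))) => (1 / (Nat.factorial (q+1+1) : ℝ)) * ∑ a, eW 1 (Rf D.hT f) y a * eps a idx := by
    ext y idx
    have hdet : Real.sqrt |(D.metric y).det| = Real.sqrt (D.hT y).det := by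
      unfold DegKundtData.metric
      rw [km_det hn _ _ _ _ (hD.1 y), abs_neg, abs_of_pos (hD.2.2.2.2 y).det_pos]
    unfold hodge
    congr 1
    refine Finset.sum_congr rfl fun a _ => ?_
    rw [hdet, duWedge_eq]
    unfold DegKundtData.metric
    rw [raise_eW hn _ _ _ y (hD.1 y) (hD.2.1 y) (isUnit_iff_ne_zero.mpr (hD.2.2.2.2 y).det_pos.ne') f hf_alt hf_tr]
    have e1 : eW 1 (Rf D.hT f) y a = Real.sqrt (D.hT y).det * eW 1 (raiseAll D.hT f) y a := by
      unfold eW Rf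
      rw [Finset.mul_sum]
      refine Finset.sum_congr rfl fun m _ => ?_
      ring
    have e2 : ((permSign fun i => Fin.append a idx (Fin.cast (rfl : q+1+1+(s+1) = q+1+1+(s+1)).symm i) : ℤ) : ℝ) = eps a idx := rfl
    rw [e1, e2]; ring
  rw [hh, extD_hodgelike _ (eW_alt 1 _ hRa) (eW_diff 1 _ hRd)]
  have hco : TransCoclosed D.hT f ↔ ∀ x (v : Fin q → Fin (q+1+1+(s+1))), 
      ∑ b, pd (fun y => Rf D.hT f y (Fin.cons b v)) b x = 0 := by
    have hup : ∀ (v : Fin (q+1) → Fin (q+1+1+(s+1))) b, Function.update v 0 b = Fin.cons b (fun i => v i.succ) := by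
      intro v b
      ext i
      refine Fin.cases ?_ (fun i => ?_) i
      · simp
      · rw [Function.update_of_ne (Fin.succ_ne_zero i)]; simp
    constructor
    · intro h x v
      have := h x (Fin.cons (α := fun _ => Fin (q+1+1+(s+1))) 0 v)
      simp only [hup, Fin.cons_succ] at this
      exact this
    · intro h x v
      simp only [hup]
      exact h x _
  rw [hco]
  constructor
  · intro h x v
    by_cases hinj : Function.Injective (Fin.cons (α := fun _ => Fin (q+1+1+(s+1))) 1 v)
    · have h1 := h x _ hinj
      rw [div_eW hn _ hRd hRr, Finset.sum_eq_single (0 : Fin (q+1))] at h1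
      · simpa using h1
      · intro i _ hi0
        rw [if_neg, zero_mul, mul_zero]
        intro hi
        have : Fin.cons (α := fun _ => Fin (q+1+1+(s+1))) 1 v i = Fin.cons (α := fun _ => Fin (q+1+1+(s+1))) 1 v 0 := by
          rw [hi]; simp
        exact hi0 (hinj this)
      · simp
    · refine Finset.sum_eq_zero fun b _ => ?_
      have : (fun y => Rf D.hT f y (Fin.cons b v)) = fun _ => 0 := by
        ext y
        by_cases hv : ∃ i, v i = 1
        · obtain ⟨i, hi⟩ := hv
          apply hRt
          refine ⟨i.succ, ?_⟩
          rw [Fin.cons_succ, hi, val_one_of hn]; omega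
        · refine Alt.eq_zero' (hRa y) ?_
          intro hc
          apply hinj
          rw [Fin.cons_injective_iff] at hc ⊢
          exact ⟨fun ⟨i, hi⟩ => hv ⟨i, hi⟩, hc.2⟩
      rw [this, pd_const]
  · intro h x c _
    rw [div_eW hn _ hRd hRr]
    refine Finset.sum_eq_zero fun i _ => ?_
    rw [h x, mul_zero, mul_zero]

/-- the effective transverse Maxwell equations satisfied by a VSI
`p`-form Maxwell field are unchanged by adding a (non-linear, i.e. `k ≥ 2`)
Chern–Simons term `μ F ∧ … ∧ F` to the field equations. -/
theorem chern_simons_immunity {n q s : ℕ} [NeZero n] [NeZero q]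
    (hn : (q+1) + (s+1) = n)
    (D : DegKundtData n) (hD : D.Regular)
    (f : TensorField n q) (hf_sm : IsSmoothT f) (hf_alt : IsAlternating f)
    (hf_tr : ∀ (x : Pt n) (v : Fin q → Fin n), (∃ i, (v i : ℕ) < 2) → f x v = 0)
    (hf_r : IndepOfR f)
    (k : ℕ) (hk : 2 ≤ k) (μ : ℝ) (hrank : (q+1) * k = (s+1) + 1) :
    ((∀ x idx, extD (duWedge f) x idx = 0) ∧
      (∀ x idx, extD (hodge hn D.metric (duWedge f)) x idx
        + μ * castT hrank (wedgePow (duWedge f) k) x idx = 0))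
    ↔ (TransClosed f ∧ TransCoclosed D.hT f) := by
  obtain ⟨q, rfl⟩ : ∃ q', q = q' + 1 := ⟨q - 1, by have := NeZero.ne q; omega⟩
  subst hn
  have hd : ∀ idx, Differentiable ℝ fun x => f x idx := fun idx => (hf_sm idx).differentiable (by simp)
  have hw : ∀ x idx, castT hrank (wedgePow (duWedge f) k) x idx = 0 := by
    intro x idx
    unfold castT
    rw [duWedge_eq]
    exact wedgePow_zero 0 _ (fun x idx h => eW_no 0 f x idx h) k hk x _
  simp only [hw, mul_zero, add_zero]
  exact and_congr (closed_iff f hd hf_alt hf_tr hf_r) (coclosed_iff D hD.1 f hd hf_alt hf_tr hf_r)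

end VSI
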